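/- Let K be a field and let A be a right anticommutative algebra over K. Then A satisfies the di-Malcev identity ((ab)c)d − ((ad)b)c − (a(cd))b − (ac)(bd) − a((bc)d) = 0 for all a,b,c,d if and only if A satisfies the identity −(ca)(bd) − (c(ba))d + ((cb)d)a − ((cd)a)b + c(b(ad)) = 0 for all a,b,c,d. -/

import Mathlib

section NonUnitalNonAssocRing

variable {A : Type*} [NonUnitalNonAssocRing A]

variable (A) in
/-- Right anticommutativity: commuting the two factors of the right operand of a product changes
its sign. It is a notion for nonassociative rings; algebras given by a bilinear map are covered
by `nonUnitalNonAssocRingOfBilin`. -/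
def IsRightAnticommutative : Prop :=
  ∀ a b c : A, a * (b * c) + a * (c * b) = 0

/-- The di-Malcev polynomial, whose vanishing at all arguments is the di-Malcev identity. -/
def diMalcev (a b c d : A) : A :=
  ((a * b) * c) * d - ((a * d) * b) * c - (a * (c * d)) * b - (a * c) * (b * d)
    - a * ((b * c) * d)

/-- The left-hand side of identity (32), the alternative form of the di-Malcev identity. -/
def identity32 (a b c d : A) : A :=
  -((c * a) * (b * d)) - (c * (b * a)) * d + ((c * b) * d) * a - ((c * d) * a) * b
    + c * (b * (a * d))

namespace IsRightAnticommutative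

theorem mul_mul_eq_neg (hA : IsRightAnticommutative A) (a b c : A) :
    a * (b * c) = -(a * (c * b)) :=
  eq_neg_of_add_eq_zero_left (hA a b c)

theorem mul_mul_mul_rev (hA : IsRightAnticommutative A) (a b c d : A) :
    a * (b * (c * d)) = a * ((d * c) * b) := by
  rw [hA.mul_mul_eq_neg b c d, mul_neg, hA.mul_mul_eq_neg a b (d * c), neg_neg]

theorem identity32_eq_neg_diMalcev (hA : IsRightAnticommutative A) (a b c d : A) :
    identity32 a b c d = -diMalcev c d a b := by
  unfold identity32 diMalcev
  rw [hA.mul_mul_eq_neg (c * a) b d, hA.mul_mul_eq_neg c b a, hA.mul_mul_mul_rev c b a d, neg_mul]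
  abel

end IsRightAnticommutative

theorem di_malcev_iff_identity32_general (hA : IsRightAnticommutative A) :
    (∀ a b c d : A, diMalcev a b c d = 0) ↔ ∀ a b c d : A, identity32 a b c d = 0 := by
  simp only [hA.identity32_eq_neg_diMalcev, neg_eq_zero]
  exact ⟨fun h a b c d ↦ h c d a b, fun h a b c d ↦ h c d a b⟩

end NonUnitalNonAssocRing

/-- The nonassociative ring underlying an algebra whose product is given as a bilinear map `f`.
It keeps the additive structure of `A`, so identities in the ring are by definition identities
in `f`. -/
abbrev nonUnitalNonAssocRingOfBilin {K A : Type*} [CommSemiring K] [AddCommGroup A] [Module K A]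
    (f : A →ₗ[K] A →ₗ[K] A) : NonUnitalNonAssocRing A where
  mul a b := f a b
  left_distrib a := map_add (f a)
  right_distrib := f.map_add₂
  zero_mul := f.map_zero₂
  mul_zero a := map_zero (f a)

/-- A right anticommutative algebra `A` over a field `K`
satisfies the di-Malcev identity
`((ab)c)d − ((ad)b)c − (a(cd))b − (ac)(bd) − a((bc)d) = 0`
if and only if it satisfies the identity
`−(ca)(bd) − (c(ba))d + ((cb)d)a − ((cd)a)b + c(b(ad)) = 0`. -/
theorem di_malcev_iff_identity32 (K : Type) [Field K]
    (A : Type) [AddCommGroup A] [Module K A]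
    (f : A →ₗ[K] A →ₗ[K] A)
    (hra : ∀ a b c : A, f a (f b c) + f a (f c b) = 0) :
    (∀ a b c d : A,
      f (f (f a b) c) d - f (f (f a d) b) c - f (f a (f c d)) b
        - f (f a c) (f b d) - f a (f (f b c) d) = 0) ↔
    (∀ a b c d : A,
      -(f (f c a) (f b d)) - f (f c (f b a)) d + f (f (f c b) d) a
        - f (f (f c d) a) b + f c (f b (f a d)) = 0) := by
  let _ : NonUnitalNonAssocRing A := nonUnitalNonAssocRingOfBilin f
  exact di_malcev_iff_identity32_general hra
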